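/- arXiv:2104.12127 — 2 statements merged into one kernel-verified Lean document; each statement's English description precedes it below -/
import Mathlib

section
/- Let {Z_t}_{t=1}^T be a sequence of centered Bernoulli random variables (i.e., each Z_t = W_t − E(W_t) for a {0,1}-valued W_t, so E(Z_t) = 0 and |Z_t| ≤ 1) whose α-mixing coefficients satisfy α(l) < exp(−K_α l^{r_α}) for some K_α > 0 and r_α > 0. Let p = ⌊K_p T^{r_p}⌋ for some K_p > 0 and r_p ∈ [0, r_α/(r_α+1)), and define ε_T = sqrt(K_1 K_2 p log(T) / T^{r_α/(r_α+1)}) + sqrt(K_2 log(T) / T^{r_α/(r_α+1)}), where K_1 = 3/2 and K_2 = 64σ² with σ² = 1/4 + 8 Σ_{l=1}^∞ α(l). Then, for any K_3 > 0 and all T sufficiently large, (1 + K_3 p^{1/2}/ε_T)^p · P(|(1/T) Σ_{t=1}^T Z_t| > ε_T) ≤ 4/T + o(1/T). -/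
open MeasureTheory Filter Asymptotics

noncomputable section

/-- The α-mixing coefficients of a sequence {Z_t}: α(l) = sup_s sup_{A,B}
|P(A∩B) − P(A)P(B)| over A in the σ-algebra generated by {Z_t : t ≤ s} and
B in the σ-algebra generated by {Z_t : t ≥ s + l}. -/
def alphaMix {Ω : Type*} [MeasurableSpace Ω] (μ : Measure Ω)
    {E : Type*} [MeasurableSpace E] (Z : ℕ → Ω → E) (l : ℕ) : ℝ :=
  sSup {r : ℝ | ∃ s : ℕ, ∃ A B : Set Ω,
    MeasurableSet[⨆ t ∈ Set.Iic s, MeasurableSpace.comap (Z t) inferInstance] A ∧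
    MeasurableSet[⨆ t ∈ Set.Ici (s + l), MeasurableSpace.comap (Z t) inferInstance] B ∧
    r = |(μ (A ∩ B)).toReal - (μ A).toReal * (μ B).toReal|}

lemma aux_cov_bound {Ω : Type*} (mP : MeasurableSpace Ω) [m0 : MeasurableSpace Ω]
    (μ : Measure Ω) [IsProbabilityMeasure μ] (hle : mP ≤ m0) (X : Ω → ℝ) (hX : Measurable[mP] X)
    (M : ℝ) (h0 : ∀ ω, 0 ≤ X ω) (hM : ∀ ω, X ω ≤ M) (B : Set Ω) (hB : MeasurableSet B)
    (a : ℝ) (hM0 : 0 ≤ M)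
    (ha : ∀ A, MeasurableSet[mP] A →
      |(μ (A ∩ B)).toReal - (μ A).toReal * (μ B).toReal| ≤ a) :
    |∫ ω in B, X ω ∂μ - μ.real B * ∫ ω, X ω ∂μ| ≤ a * M := by
  have hXm : Measurable X := hX.mono hle le_rfl
  have hint : Integrable X μ := by
    refine Integrable.of_bound hXm.aestronglyMeasurable M (ae_of_all _ fun ω => ?_)
    rw [Real.norm_eq_abs, abs_of_nonneg (h0 ω)]; exact hM ω
  have key : ∀ ν : Measure Ω, IsFiniteMeasure ν →
      IntegrableOn (fun t => ν.real {ω | t ≤ X ω}) (Set.Ioc 0 M) := by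
    intro ν hν
    have : Antitone (fun t : ℝ => ν.real {ω | t ≤ X ω}) := by
      intro s t hst
      exact measureReal_mono (fun ω (hω : t ≤ X ω) => le_trans hst hω)
    have h := this.intervalIntegrable (μ := volume) (a := 0) (b := M)
    rwa [intervalIntegrable_iff_integrableOn_Ioc_of_le hM0] at h
  rw [hint.integral_eq_integral_Ioc_meas_le (ae_of_all _ h0) (ae_of_all _ hM),
    (hint.restrict (s := B)).integral_eq_integral_Ioc_meas_le (ae_of_all _ h0) (ae_of_all _ hM),
    ← integral_const_mul, ← integral_sub (key _ inferInstance) ((key _ inferInstance).const_mul _)]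
  have := norm_setIntegral_le_of_norm_le_const (μ := volume) (s := Set.Ioc (0:ℝ) M) (C := a)
    (f := fun t => (μ.restrict B).real {ω | t ≤ X ω} - μ.real B * μ.real {ω | t ≤ X ω})
    (by simp) (by
      intro t _
      have hA : MeasurableSet[mP] {ω | t ≤ X ω} := hX measurableSet_Ici
      have := ha _ hA
      rw [Real.norm_eq_abs, measureReal_restrict_apply (hle _ hA), mul_comm]
      exact this)
  simpa [hM0] using this

lemma aux_alpha_le {Ω : Type*} [MeasurableSpace Ω] (μ : Measure Ω) [IsProbabilityMeasure μ]
    (Z : ℕ → Ω → ℝ) (l s : ℕ) (A B : Set Ω)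
    (hA : MeasurableSet[⨆ t ∈ Set.Iic s, MeasurableSpace.comap (Z t) inferInstance] A)
    (hB : MeasurableSet[⨆ t ∈ Set.Ici (s + l), MeasurableSpace.comap (Z t) inferInstance] B) :
    |(μ (A ∩ B)).toReal - (μ A).toReal * (μ B).toReal| ≤ alphaMix μ Z l := by
  unfold alphaMix
  apply le_csSup
  · refine ⟨1, ?_⟩
    rintro r ⟨s, A, B, -, -, rfl⟩
    have h1 : μ.real (A ∩ B) ≤ 1 := measureReal_le_one
    have h2 : μ.real A ≤ 1 := measureReal_le_one
    have h3 : μ.real B ≤ 1 := measureReal_le_one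
    have h4 : 0 ≤ μ.real (A ∩ B) := measureReal_nonneg
    have h5 : 0 ≤ μ.real A := measureReal_nonneg
    have h6 : 0 ≤ μ.real B := measureReal_nonneg
    change |μ.real (A ∩ B) - μ.real A * μ.real B| ≤ 1
    rw [abs_le]; constructor <;> nlinarith [mul_nonneg h5 h6]
  · exact ⟨s, A, B, hA, hB, rfl⟩

lemma aux_alpha_nonneg {Ω : Type*} [MeasurableSpace Ω] (μ : Measure Ω)
    (Z : ℕ → Ω → ℝ) (l : ℕ) : 0 ≤ alphaMix μ Z l := by
  unfold alphaMix
  apply Real.sSup_nonneg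
  rintro r ⟨s, A, B, -, -, rfl⟩
  positivity

lemma aux_mean {Ω : Type*} [m0 : MeasurableSpace Ω] (μ : Measure Ω)
    [IsProbabilityMeasure μ] (W : ℕ → Ω → ℝ)
    (hW : ∀ t ω, W t ω = 0 ∨ W t ω = 1)
    (hWmeas : ∀ t, Measurable (W t))
    (t : ℕ) : 0 ≤ ∫ ω', W t ω' ∂μ ∧ ∫ ω', W t ω' ∂μ ≤ 1 ∧ Integrable (W t) μ := by
  have hi : Integrable (W t) μ := by
    refine Integrable.of_bound (hWmeas t).aestronglyMeasurable 1 (ae_of_all _ fun ω => ?_)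
    rcases hW t ω with h | h <;> simp [h]
  refine ⟨integral_nonneg fun ω => ?_, ?_, hi⟩
  · rcases hW t ω with h | h <;> simp [h]
  · calc _ ≤ ∫ ω, (1:ℝ) ∂μ := integral_mono hi (integrable_const _) fun ω => by
          rcases hW t ω with h | h <;> simp [h]
      _ = 1 := by simp

lemma aux_Z_abs {Ω : Type*} [m0 : MeasurableSpace Ω] (μ : Measure Ω)
    [IsProbabilityMeasure μ] (Z W : ℕ → Ω → ℝ)
    (hW : ∀ t ω, W t ω = 0 ∨ W t ω = 1)
    (hWmeas : ∀ t, Measurable (W t))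
    (hZ : ∀ t ω, Z t ω = W t ω - ∫ ω', W t ω' ∂μ)
    (t : ℕ) (ω : Ω) : |Z t ω| ≤ 1 := by
  obtain ⟨h1, h2, -⟩ := aux_mean μ W hW hWmeas t
  rw [hZ, abs_le]
  rcases hW t ω with h | h <;> rw [h] <;> constructor <;> linarith

lemma aux_Z_meas {Ω : Type*} [m0 : MeasurableSpace Ω] (μ : Measure Ω)
    (Z W : ℕ → Ω → ℝ)
    (hWmeas : ∀ t, Measurable (W t))
    (hZ : ∀ t ω, Z t ω = W t ω - ∫ ω', W t ω' ∂μ)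
    (t : ℕ) : Measurable (Z t) := by
  have : Z t = fun ω => W t ω - ∫ ω', W t ω' ∂μ := funext (hZ t)
  rw [this]; exact (hWmeas t).sub_const _

lemma aux_exp_int {Ω : Type*} [m0 : MeasurableSpace Ω] (μ : Measure Ω)
    [IsProbabilityMeasure μ] (Z W : ℕ → Ω → ℝ)
    (hW : ∀ t ω, W t ω = 0 ∨ W t ω = 1)
    (hWmeas : ∀ t, Measurable (W t))
    (hZ : ∀ t ω, Z t ω = W t ω - ∫ ω', W t ω' ∂μ)
    (u : ℝ) (s : Finset ℕ) :
    Integrable (fun ω => Real.exp (u * ∑ t ∈ s, Z t ω)) μ := by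
  have hm : Measurable (fun ω => Real.exp (u * ∑ t ∈ s, Z t ω)) := by
    have := aux_Z_meas μ Z W hWmeas hZ
    fun_prop
  refine Integrable.of_bound hm.aestronglyMeasurable (Real.exp (|u| * s.card))
    (ae_of_all _ fun ω => ?_)
  rw [Real.norm_eq_abs, Real.abs_exp, Real.exp_le_exp]
  refine (le_abs_self _).trans ?_
  rw [abs_mul]
  gcongr
  refine (Finset.abs_sum_le_sum_abs _ _).trans ?_
  refine (Finset.sum_le_sum fun t _ => aux_Z_abs μ Z W hW hWmeas hZ t ω).trans ?_
  simp

lemma aux_mgf_one {Ω : Type*} [m0 : MeasurableSpace Ω] (μ : Measure Ω)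
    [IsProbabilityMeasure μ] (Z W : ℕ → Ω → ℝ)
    (hW : ∀ t ω, W t ω = 0 ∨ W t ω = 1)
    (hWmeas : ∀ t, Measurable (W t))
    (hZ : ∀ t ω, Z t ω = W t ω - ∫ ω', W t ω' ∂μ)
    (u : ℝ) (hu : |u| ≤ 1) (t : ℕ) :
    ∫ ω, Real.exp (u * Z t ω) ∂μ ≤ Real.exp (u ^ 2) := by
  obtain ⟨h1, h2, hi⟩ := aux_mean μ W hW hWmeas t
  have hZi : Integrable (Z t) μ := by
    have : Z t = fun ω => W t ω - ∫ ω', W t ω' ∂μ := funext (hZ t)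
    rw [this]; exact hi.sub (integrable_const _)
  have hZ0 : ∫ ω, Z t ω ∂μ = 0 := by
    simp_rw [hZ]
    rw [integral_sub hi (integrable_const _)]; simp
  have hei := aux_exp_int μ Z W hW hWmeas hZ u {t}
  simp only [Finset.sum_singleton] at hei
  calc _ ≤ ∫ ω, (1 + u ^ 2 + u * Z t ω) ∂μ := by
        refine integral_mono hei ((integrable_const _).add (hZi.const_mul u)) fun ω => ?_
        have hz := aux_Z_abs μ Z W hW hWmeas hZ t ω
        have hx : |u * Z t ω| ≤ 1 := by
          rw [abs_mul]; nlinarith [abs_nonneg u, abs_nonneg (Z t ω)]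
        have := (abs_le.mp (Real.abs_exp_sub_one_sub_id_le hx)).2
        have h3 : (u * Z t ω) ^ 2 ≤ u ^ 2 := by
          rw [mul_pow]
          have : (Z t ω) ^ 2 ≤ 1 := by rw [sq_le_one_iff_abs_le_one]; exact hz
          nlinarith [sq_nonneg u]
        simp only; linarith
    _ = 1 + u ^ 2 := by
        rw [integral_add (integrable_const _) (hZi.const_mul u), integral_const_mul, hZ0]; simp
    _ ≤ _ := by linarith [Real.add_one_le_exp (u ^ 2)]

lemma aux_step {Ω : Type*} [m0 : MeasurableSpace Ω] (μ : Measure Ω)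
    [IsProbabilityMeasure μ] (Z W : ℕ → Ω → ℝ)
    (hW : ∀ t ω, W t ω = 0 ∨ W t ω = 1)
    (hWmeas : ∀ t, Measurable (W t))
    (hZ : ∀ t ω, Z t ω = W t ω - ∫ ω', W t ω' ∂μ)
    (u : ℝ) (hu : |u| ≤ 1) (m s : ℕ) (X : Ω → ℝ)
    (hX : Measurable[⨆ t ∈ Set.Iic s, MeasurableSpace.comap (Z t) inferInstance] X)
    (M : ℝ) (h0 : ∀ ω, 0 ≤ X ω) (hM : ∀ ω, X ω ≤ M) (hM0 : 0 ≤ M) :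
    ∫ ω, X ω * Real.exp (u * Z (s + m) ω) ∂μ ≤
      (∫ ω, X ω ∂μ) * Real.exp (u ^ 2) + 3 * alphaMix μ Z m * M := by
  set P := ∫ ω', W (s + m) ω' ∂μ with hP
  obtain ⟨h1, h2, hi⟩ := aux_mean μ W hW hWmeas (s + m)
  rw [← hP] at h1 h2
  have hZm := aux_Z_meas μ Z W hWmeas hZ
  have hle : (⨆ t ∈ Set.Iic s, MeasurableSpace.comap (Z t) inferInstance) ≤ m0 :=
    iSup₂_le fun t _ => (hZm t).comap_le
  have hXm : Measurable X := hX.mono hle le_rfl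
  have hint : Integrable X μ := by
    refine Integrable.of_bound hXm.aestronglyMeasurable M (ae_of_all _ fun ω => ?_)
    rw [Real.norm_eq_abs, abs_of_nonneg (h0 ω)]; exact hM ω
  set B : Set Ω := Z (s + m) ⁻¹' {1 - P} with hBdef
  have hBW : ∀ ω, ω ∈ B ↔ W (s + m) ω = 1 := by
    intro ω
    simp only [hBdef, Set.mem_preimage, Set.mem_singleton_iff, hZ]
    constructor <;> intro h <;> linarith
  have hBF : MeasurableSet[⨆ t ∈ Set.Ici (s + m), MeasurableSpace.comap (Z t) inferInstance] B := by
    have hh : MeasurableSpace.comap (Z (s + m)) inferInstance ≤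
      (⨆ t ∈ Set.Ici (s + m), MeasurableSpace.comap (Z t) inferInstance) :=
      le_iSup₂_of_le (s + m) (Set.mem_Ici.mpr le_rfl) le_rfl
    exact hh _ ⟨{1 - P}, measurableSet_singleton _, rfl⟩
  have hB : MeasurableSet B := hZm _ (measurableSet_singleton _)
  have hcov := aux_cov_bound _ μ hle X hX M h0 hM B hB (alphaMix μ Z m) hM0
    (fun A hA => aux_alpha_le μ Z m s A B hA hBF)
  set a := Real.exp (-u * P)
  set b := Real.exp (u * (1 - P)) - a with hb
  have hexp : ∀ ω, Real.exp (u * Z (s + m) ω) = a + b * B.indicator (fun _ => (1:ℝ)) ω := by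
    intro ω
    rw [hZ]
    rcases hW (s + m) ω with h | h
    · have : ω ∉ B := by rw [hBW, h]; norm_num
      simp only [this, not_false_eq_true, Set.indicator_of_notMem, h, ← hP, a]
      simp
    · have : ω ∈ B := by rw [hBW, h]
      simp only [this, Set.indicator_of_mem, h, ← hP, hb, a]
      ring
  have hb3 : |b| ≤ 3 := by
    have e1 : Real.exp 1 < 3 := Real.exp_one_lt_three
    have hu' := abs_le.mp hu
    have q1 : Real.exp (u * (1 - P)) ≤ Real.exp 1 := Real.exp_le_exp.mpr (by nlinarith)
    have q2 : a ≤ Real.exp 1 := Real.exp_le_exp.mpr (by nlinarith)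
    have q3 : 0 < a := Real.exp_pos _
    have q4 := Real.exp_pos (u * (1 - P))
    rw [abs_le]; constructor <;> linarith
  have i1 : Integrable (fun ω => B.indicator X ω) μ := hint.indicator hB
  have e1 : ∫ ω, X ω * Real.exp (u * Z (s + m) ω) ∂μ = a * ∫ ω, X ω ∂μ + b * ∫ ω in B, X ω ∂μ := by
    rw [← integral_indicator hB, ← integral_const_mul, ← integral_const_mul,
      ← integral_add (hint.const_mul a) (i1.const_mul b)]
    congr 1; ext ω
    rw [hexp]
    by_cases h : ω ∈ B <;> simp [h] <;> ring
  have e2 : ∫ ω, Real.exp (u * Z (s + m) ω) ∂μ = a + b * μ.real B := by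
    simp_rw [hexp]
    rw [integral_add (integrable_const _) (((integrable_const _).indicator hB).const_mul b),
      integral_const_mul, integral_indicator hB]
    simp
  have e3 := aux_mgf_one μ Z W hW hWmeas hZ u hu (s + m)
  have e4 : 0 ≤ ∫ ω, X ω ∂μ := integral_nonneg h0
  have e5 : b * (∫ ω in B, X ω ∂μ - μ.real B * ∫ ω, X ω ∂μ) ≤ 3 * (alphaMix μ Z m * M) := by
    refine (le_abs_self _).trans ?_
    rw [abs_mul]
    exact mul_le_mul hb3 hcov (abs_nonneg _) (by norm_num)
  rw [e2] at e3
  have e6 := mul_le_mul_of_nonneg_left e3 e4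
  rw [e1]
  linarith

lemma aux_mgf_sum {Ω : Type*} [m0 : MeasurableSpace Ω] (μ : Measure Ω)
    [IsProbabilityMeasure μ] (Z W : ℕ → Ω → ℝ)
    (hW : ∀ t ω, W t ω = 0 ∨ W t ω = 1)
    (hWmeas : ∀ t, Measurable (W t))
    (hZ : ∀ t ω, Z t ω = W t ω - ∫ ω', W t ω' ∂μ)
    (u : ℝ) (hu : |u| ≤ 1) (m r k : ℕ) :
    ∫ ω, Real.exp (u * ∑ i ∈ Finset.range k, Z (r + i * m) ω) ∂μ ≤
      Real.exp (k * u ^ 2) * (1 + 3 * alphaMix μ Z m * k * Real.exp (k * |u|)) := by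
  have hα := aux_alpha_nonneg μ Z m
  rcases k with _ | k
  · simp
  induction k with
  | zero =>
    have := aux_mgf_one μ Z W hW hWmeas hZ u hu r
    simp only [zero_add, Finset.range_one, Finset.sum_singleton, zero_mul, add_zero]
    refine this.trans ?_
    push_cast
    rw [one_mul]
    refine le_mul_of_one_le_right (Real.exp_pos _).le ?_
    have : 0 ≤ 3 * alphaMix μ Z m * 1 * Real.exp (1 * |u|) := by positivity
    linarith
  | succ k ih =>
    have hmeas : ∀ i ≤ k, Measurable[⨆ t ∈ Set.Iic (r + k * m),
        MeasurableSpace.comap (Z t) inferInstance] (Z (r + i * m)) := by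
      intro i hi
      have hle : r + i * m ≤ r + k * m := by gcongr
      rw [measurable_iff_comap_le]
      exact le_iSup₂_of_le (r + i * m) (Set.mem_Iic.mpr hle) le_rfl
    have hS := aux_step μ Z W hW hWmeas hZ u hu m (r + k * m)
      (fun ω => Real.exp (u * ∑ i ∈ Finset.range (k + 1), Z (r + i * m) ω))
      (by
        refine Real.measurable_exp.comp (Measurable.const_mul ?_ u)
        refine Finset.measurable_fun_sum _ fun i hi => ?_
        exact hmeas i (by simpa [Nat.lt_succ_iff] using hi))
      (Real.exp ((k + 1 : ℕ) * |u|)) (fun ω => (Real.exp_pos _).le)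
      (fun ω => by
        rw [Real.exp_le_exp]
        refine (le_abs_self _).trans ?_
        rw [abs_mul, mul_comm]
        gcongr
        refine (Finset.abs_sum_le_sum_abs _ _).trans ?_
        refine (Finset.sum_le_sum fun t _ => aux_Z_abs μ Z W hW hWmeas hZ _ ω).trans ?_
        simp) (Real.exp_pos _).le
    have e0 : ∀ ω, Real.exp (u * ∑ i ∈ Finset.range (k + 1 + 1), Z (r + i * m) ω) =
        Real.exp (u * ∑ i ∈ Finset.range (k + 1), Z (r + i * m) ω) *
          Real.exp (u * Z (r + k * m + m) ω) := by
      intro ω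
      rw [Finset.sum_range_succ, mul_add, Real.exp_add]
      congr 4
      ring
    simp_rw [e0]
    refine hS.trans ?_
    have h1 := mul_le_mul_of_nonneg_right ih (Real.exp_pos (u ^ 2)).le
    refine (add_le_add_left h1 _).trans ?_
    set n : ℕ := k + 1
    have q1 : Real.exp ((n + 1 : ℕ) * u ^ 2) = Real.exp (n * u ^ 2) * Real.exp (u ^ 2) := by
      rw [← Real.exp_add]; push_cast; ring_nf
    have q2 : Real.exp (n * |u|) ≤ Real.exp ((n + 1 : ℕ) * |u|) := by
      rw [Real.exp_le_exp]; push_cast; nlinarith [abs_nonneg u]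
    have q3 : 1 ≤ Real.exp (n * u ^ 2) * Real.exp (u ^ 2) := by
      rw [← q1]; exact Real.one_le_exp (by positivity)
    rw [q1]
    set E := Real.exp (n * u ^ 2) * Real.exp (u ^ 2)
    set G := Real.exp (n * |u|)
    set H := Real.exp ((n + 1 : ℕ) * |u|)
    set α := alphaMix μ Z m
    have hG : 0 < G := Real.exp_pos _
    have g1 : 3 * α * n * G ≤ 3 * α * n * H := by gcongr
    have g2 : 3 * α * G ≤ 3 * α * H := by gcongr
    have g3 : 0 ≤ 3 * α * H := by positivity
    have g4 := mul_le_mul_of_nonneg_left g1 (zero_le_one.trans q3)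
    have g5 := mul_le_mul_of_nonneg_right q3 g3
    calc _ = E * (1 + 3 * α * n * G) + 3 * α * G := by simp only [E]; ring
      _ ≤ E * (1 + 3 * α * (n + 1 : ℕ) * H) := by push_cast; linarith

lemma aux_sum_split (f : ℕ → ℝ) (m n : ℕ) :
    ∑ t ∈ Finset.range (n * m), f t =
      ∑ r ∈ Finset.range m, ∑ i ∈ Finset.range n, f (r + i * m) := by
  induction n with
  | zero => simp
  | succ n ih =>
    rw [add_mul, one_mul, Finset.sum_range_add, ih]
    simp_rw [Finset.sum_range_succ]
    rw [Finset.sum_add_distrib]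
    simp_rw [add_comm (n * m)]

lemma aux_mgf_total {Ω : Type*} [m0 : MeasurableSpace Ω] (μ : Measure Ω)
    [IsProbabilityMeasure μ] (Z W : ℕ → Ω → ℝ)
    (hW : ∀ t ω, W t ω = 0 ∨ W t ω = 1)
    (hWmeas : ∀ t, Measurable (W t))
    (hZ : ∀ t ω, Z t ω = W t ω - ∫ ω', W t ω' ∂μ)
    (u : ℝ) (hu : |u| ≤ 1) (m T : ℕ) (hm : 0 < m) :
    ∫ ω, Real.exp (u / m * ∑ t ∈ Finset.range T, Z t ω) ∂μ ≤
      3 * (Real.exp ((T / m : ℕ) * u ^ 2) *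
        (1 + 3 * alphaMix μ Z m * (T / m : ℕ) * Real.exp ((T / m : ℕ) * |u|))) := by
  set n := T / m
  have hmR : (0:ℝ) < m := by exact_mod_cast hm
  have hi : ∀ r, Integrable (fun ω => Real.exp (u * ∑ i ∈ Finset.range n, Z (r + i * m) ω)) μ := by
    intro r
    have := aux_exp_int μ Z W hW hWmeas hZ u
      ((Finset.range n).map ⟨fun i => r + i * m, fun i j h => by
        simpa [hm.ne'] using h⟩)
    simp only [Finset.sum_map] at this
    exact this
  have hpt : ∀ ω, Real.exp (u / m * ∑ t ∈ Finset.range T, Z t ω) ≤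
      3 * ∑ r ∈ Finset.range m, (m:ℝ)⁻¹ *
        Real.exp (u * ∑ i ∈ Finset.range n, Z (r + i * m) ω) := by
    intro ω
    have hT : T = n * m + T % m := by rw [mul_comm]; exact (Nat.div_add_mod T m).symm
    rw [hT, Finset.sum_range_add, mul_add, Real.exp_add, mul_comm]
    refine mul_le_mul ?_ ?_ (Real.exp_pos _).le (by norm_num)
    · refine le_trans (Real.exp_le_exp.mpr ?_) Real.exp_one_lt_three.le
      refine (le_abs_self _).trans ?_
      rw [abs_mul, abs_div, abs_of_pos hmR]
      have : |∑ x ∈ Finset.range (T % m), Z (n * m + x) ω| ≤ m := by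
        refine (Finset.abs_sum_le_sum_abs _ _).trans ?_
        refine (Finset.sum_le_sum fun t _ => aux_Z_abs μ Z W hW hWmeas hZ _ ω).trans ?_
        simp only [Finset.sum_const, Finset.card_range, nsmul_eq_mul, mul_one]
        exact_mod_cast (Nat.mod_lt T hm).le
      calc _ ≤ 1 / m * (m:ℝ) := by gcongr
        _ = 1 := by field_simp
    · rw [aux_sum_split]
      have := convexOn_exp.map_sum_le (t := Finset.range m) (w := fun _ => (m:ℝ)⁻¹)
        (p := fun r => u * ∑ i ∈ Finset.range n, Z (r + i * m) ω)
        (fun _ _ => by positivity) (by simp [hmR.ne']) (fun _ _ => Set.mem_univ _)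
      simp only [smul_eq_mul] at this
      refine le_trans (le_of_eq ?_) this
      congr 1
      rw [Finset.mul_sum]
      refine Finset.sum_congr rfl fun r _ => ?_
      ring
  calc _ ≤ ∫ ω, 3 * ∑ r ∈ Finset.range m, (m:ℝ)⁻¹ *
        Real.exp (u * ∑ i ∈ Finset.range n, Z (r + i * m) ω) ∂μ :=
        integral_mono (aux_exp_int μ Z W hW hWmeas hZ _ _)
          ((integrable_finsetSum _ fun r _ => (hi r).const_mul _).const_mul _) hpt
    _ = 3 * ∑ r ∈ Finset.range m, (m:ℝ)⁻¹ * 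
        ∫ ω, Real.exp (u * ∑ i ∈ Finset.range n, Z (r + i * m) ω) ∂μ := by
        rw [integral_const_mul, integral_finsetSum _ fun r _ => (hi r).const_mul _]
        simp_rw [integral_const_mul]
    _ ≤ 3 * ∑ r ∈ Finset.range m, (m:ℝ)⁻¹ * (Real.exp (n * u ^ 2) *
        (1 + 3 * alphaMix μ Z m * n * Real.exp (n * |u|))) := by
        gcongr with r _
        exact aux_mgf_sum μ Z W hW hWmeas hZ u hu m r n
    _ = _ := by
        rw [Finset.sum_const, Finset.card_range, nsmul_eq_mul]
        field_simp

lemma aux_tail {Ω : Type*} [m0 : MeasurableSpace Ω] (μ : Measure Ω)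
    [IsProbabilityMeasure μ] (Z W : ℕ → Ω → ℝ)
    (hW : ∀ t ω, W t ω = 0 ∨ W t ω = 1)
    (hWmeas : ∀ t, Measurable (W t))
    (hZ : ∀ t ω, Z t ω = W t ω - ∫ ω', W t ω' ∂μ)
    (ε : ℝ) (hε : 0 < ε) (hε1 : ε / 2 ≤ 1) (m T : ℕ) (hm : 0 < m) (hT : 0 < T)
    (hsmall : 3 * alphaMix μ Z m * (T / m : ℕ) * Real.exp ((T / m : ℕ) * (ε / 2)) ≤ 1) :
    (μ {ω | ε < |(T : ℝ)⁻¹ * ∑ t ∈ Finset.range T, Z t ω|}).toReal ≤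
      12 * Real.exp (- ((T:ℝ) / m) * ε ^ 2 / 4) := by
  have hmR : (0:ℝ) < m := by exact_mod_cast hm
  have hTR : (0:ℝ) < T := by exact_mod_cast hT
  have hdiv : ((T / m : ℕ) : ℝ) ≤ (T:ℝ) / m := Nat.cast_div_le
  set S : Ω → ℝ := fun ω => ∑ t ∈ Finset.range T, Z t ω with hS
  have bound : ∀ u : ℝ, |u| = ε / 2 →
      Real.exp (-((T:ℝ) / m) * ε ^ 2 / 2) * ∫ ω, Real.exp (u / m * S ω) ∂μ ≤
      6 * Real.exp (- ((T:ℝ) / m) * ε ^ 2 / 4) := by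
    intro u hu
    have h := aux_mgf_total μ Z W hW hWmeas hZ u (hu.le.trans hε1) m T hm
    rw [hu] at h
    have hu2 : u ^ 2 = ε ^ 2 / 4 := by rw [← sq_abs, hu]; ring
    calc _ ≤ Real.exp (-((T:ℝ) / m) * ε ^ 2 / 2) *
          (3 * (Real.exp ((T / m : ℕ) * u ^ 2) * (1 + 1))) := by
          gcongr
          exact h.trans (by gcongr)
      _ = 6 * (Real.exp (-((T:ℝ) / m) * ε ^ 2 / 2) * Real.exp ((T / m : ℕ) * u ^ 2)) := by ring
      _ ≤ _ := by
          rw [← Real.exp_add]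
          gcongr
          rw [hu2]
          nlinarith [sq_nonneg ε]
  have hi := fun v => aux_exp_int μ Z W hW hWmeas hZ v (Finset.range T)
  have u1 := ProbabilityTheory.measure_ge_le_exp_mul_mgf (μ := μ) (X := S) (t := (ε / 2) / m)
    (ε * T) (by positivity) (hi _)
  have u2 := ProbabilityTheory.measure_le_le_exp_mul_mgf (μ := μ) (X := S) (t := (-(ε / 2)) / m)
    (-(ε * T)) (by rw [neg_div]; simp; positivity) (hi _)
  have b1 := bound (ε / 2) (abs_of_pos (by positivity))
  have b2 := bound (-(ε / 2)) (by rw [abs_neg]; exact abs_of_pos (by positivity))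
  have w1 : -(ε / 2 / m) * (ε * T) = -((T:ℝ) / m) * ε ^ 2 / 2 := by ring
  have w2 : -(-(ε / 2) / m) * -(ε * T) = -((T:ℝ) / m) * ε ^ 2 / 2 := by ring
  rw [w1] at u1
  rw [w2] at u2
  have hsub : {ω | ε < |(T : ℝ)⁻¹ * ∑ t ∈ Finset.range T, Z t ω|} ⊆
      {ω | ε * T ≤ S ω} ∪ {ω | S ω ≤ -(ε * T)} := by
    intro ω hω
    simp only [Set.mem_ofPred_eq] at hω
    change ε < |(T:ℝ)⁻¹ * S ω| at hω
    rw [abs_mul, abs_inv, abs_of_pos hTR, inv_mul_eq_div, lt_div_iff₀ hTR] at hω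
    rcases lt_abs.mp hω with h | h
    · left; exact h.le
    · right; simp only [Set.mem_ofPred_eq]; linarith
  have := (measureReal_mono (μ := μ) hsub).trans (measureReal_union_le _ _)
  change μ.real _ ≤ _
  unfold ProbabilityTheory.mgf at u1 u2
  linarith


lemma aux_eps_tendsto (β K_p r_p c : ℝ) (hrp : r_p < β) (hKp : 0 < K_p)
    (hrp0 : 0 ≤ r_p) (p : ℕ → ℕ) (hc : 0 ≤ c)
    (hp : ∀ T, p T = Nat.floor (K_p * (T : ℝ) ^ r_p)) :
    Tendsto (fun T : ℕ => Real.sqrt ((3 / 2) * c * (p T : ℝ) * Real.log T / (T : ℝ) ^ β)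
        + Real.sqrt (c * Real.log T / (T : ℝ) ^ β)) atTop (nhds 0) := by
  have base : ∀ s : ℝ, 0 < s → Tendsto (fun T : ℕ => Real.log T / (T : ℝ) ^ s) atTop (nhds 0) := by
    intro s hs
    exact (isLittleO_log_rpow_atTop hs).tendsto_div_nhds_zero.comp tendsto_natCast_atTop_atTop
  have h2 : Tendsto (fun T : ℕ => c * Real.log T / (T : ℝ) ^ β) atTop (nhds 0) := by
    have := (base β (by linarith)).const_mul c
    simpa [mul_div_assoc] using this
  have h1 : Tendsto (fun T : ℕ => (3 / 2) * c * (p T : ℝ) * Real.log T / (T : ℝ) ^ β)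
      atTop (nhds 0) := by
    have h3 := (base (β - r_p) (by linarith)).const_mul ((3 / 2) * c * K_p)
    rw [mul_zero] at h3
    refine squeeze_zero' ?_ ?_ h3
    · filter_upwards [eventually_ge_atTop 1] with T hT
      have : 0 ≤ Real.log T := Real.log_natCast_nonneg T
      positivity
    · filter_upwards [eventually_ge_atTop 1] with T hT
      have hl : 0 ≤ Real.log T := Real.log_natCast_nonneg T
      have hT0 : (0:ℝ) < T := by exact_mod_cast hT
      have hpT : (p T : ℝ) ≤ K_p * (T : ℝ) ^ r_p := by
        rw [hp]; exact Nat.floor_le (by positivity)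
      rw [Real.rpow_sub hT0]
      calc _ ≤ 3 / 2 * c * (K_p * (T : ℝ) ^ r_p) * Real.log T / (T : ℝ) ^ β := by gcongr
        _ = _ := by field_simp
  have := (h1.sqrt).add (h2.sqrt)
  simpa using this

set_option maxHeartbeats 2000000

/- STATEMENT 10: Bernstein-type bound for centered Bernoulli α-mixing sequences.
With σ² = 1/4 + 8 Σ_{l≥1} α(l), K₁ = 3/2, K₂ = 64σ²,
ε_T = sqrt(K₁K₂ p log T / T^{r_α/(r_α+1)}) + sqrt(K₂ log T / T^{r_α/(r_α+1)}),
p = ⌊K_p T^{r_p}⌋, for any K₃ > 0 and all T large,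
(1 + K₃ p^{1/2}/ε_T)^p P(|T⁻¹ Σ Z_t| > ε_T) ≤ 4/T + o(1/T). -/
theorem bernoulli_mixing_concentration
    {Ω : Type*} [MeasurableSpace Ω] (μ : Measure Ω) [IsProbabilityMeasure μ]
    (Z W : ℕ → Ω → ℝ)
    (hW : ∀ t ω, W t ω = 0 ∨ W t ω = 1)
    (hWmeas : ∀ t, Measurable (W t))
    (hZ : ∀ t ω, Z t ω = W t ω - ∫ ω', W t ω' ∂μ)
    (K_α r_α K_p r_p : ℝ) (hKα : 0 < K_α) (hrα : 0 < r_α)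
    (hKp : 0 < K_p) (hrp0 : 0 ≤ r_p) (hrp : r_p < r_α / (r_α + 1))
    (hmix : ∀ l : ℕ, 1 ≤ l → alphaMix μ Z l < Real.exp (-K_α * (l : ℝ) ^ r_α))
    (p : ℕ → ℕ) (hp : ∀ T, p T = Nat.floor (K_p * (T : ℝ) ^ r_p))
    (σ2 : ℝ) (hσ2 : σ2 = 1 / 4 + 8 * ∑' l : ℕ, alphaMix μ Z (l + 1))
    (ε : ℕ → ℝ)
    (hε : ∀ T : ℕ, ε T =
      Real.sqrt ((3 / 2) * (64 * σ2) * (p T : ℝ) * Real.log T / (T : ℝ) ^ (r_α / (r_α + 1)))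
        + Real.sqrt ((64 * σ2) * Real.log T / (T : ℝ) ^ (r_α / (r_α + 1)))) :
    ∀ K_3 : ℝ, 0 < K_3 →
      ∃ e : ℕ → ℝ, e =o[atTop] (fun T : ℕ => (T : ℝ)⁻¹) ∧
        ∀ᶠ T : ℕ in atTop,
          (1 + K_3 * Real.sqrt (p T) / ε T) ^ (p T) *
              (μ {ω | ε T < |(T : ℝ)⁻¹ * ∑ t ∈ Finset.range T, Z t ω|}).toReal
            ≤ 4 / (T : ℝ) + e T := by
  intro K_3 hK3
  refine ⟨fun _ => 0, isLittleO_zero _ _, ?_⟩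
  set β := r_α / (r_α + 1) with hβ
  have hr1 : 0 < r_α + 1 := by linarith
  have hβ0 : 0 < β := div_pos hrα hr1
  have hβ1 : β < 1 := by rw [hβ, div_lt_one hr1]; linarith
  have hβr : (1 - β) * r_α = β := by rw [hβ]; field_simp; ring
  have hσ : 1 / 4 ≤ σ2 := by
    have : 0 ≤ ∑' l : ℕ, alphaMix μ Z (l + 1) := tsum_nonneg fun l => aux_alpha_nonneg μ Z _
    rw [hσ2]; linarith
  have hlim : Tendsto ε atTop (nhds 0) := by
    have := aux_eps_tendsto β K_p r_p (64 * σ2) hrp hKp hrp0 p (by linarith) hp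
    rwa [← funext hε] at this
  have hTβ : Tendsto (fun T : ℕ => (T : ℝ) ^ β) atTop atTop :=
    (tendsto_rpow_atTop hβ0).comp tendsto_natCast_atTop_atTop
  have hTβ1 : Tendsto (fun T : ℕ => (T : ℝ) ^ (1 - β)) atTop atTop :=
    (tendsto_rpow_atTop (by linarith : 0 < 1 - β)).comp tendsto_natCast_atTop_atTop
  have hTh : Tendsto (fun T : ℕ => (T : ℝ) ^ (1 - β / 2)) atTop atTop :=
    (tendsto_rpow_atTop (by linarith : 0 < 1 - β / 2)).comp tendsto_natCast_atTop_atTop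
  have hexp0 : Tendsto (fun T : ℕ => 3 * ((T : ℝ) ^ β * Real.exp (-(K_α / 2) * (T : ℝ) ^ β)))
      atTop (nhds 0) := by
    have := (tendsto_rpow_mul_exp_neg_mul_atTop_nhds_zero 1 (K_α / 2) (by positivity)).comp hTβ
    have := this.const_mul 3
    simpa [Function.comp_def] using this
  filter_upwards [eventually_ge_atTop 3, hlim.eventually_lt_const (show (0:ℝ) < 2 by norm_num),
    hlim.eventually_lt_const hKα, hTβ1.eventually_ge_atTop 1, hTh.eventually_ge_atTop (1 + K_3),
    hexp0.eventually_lt_const (show (0:ℝ) < 1 by norm_num)]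
    with T hT3 he2 heK hm1 hTK hexp1
  have hTR : (3:ℝ) ≤ T := by exact_mod_cast hT3
  have hT0 : (0:ℝ) < T := by linarith
  have hlog : 1 ≤ Real.log T := by
    rw [Real.le_log_iff_exp_le hT0]
    exact Real.exp_one_lt_three.le.trans hTR
  set Q := (T:ℝ) ^ β with hQ
  have hQ0 : 0 < Q := Real.rpow_pos_of_pos hT0 _
  set m := Nat.ceil ((T:ℝ) ^ (1 - β)) with hm
  have hmge : (T:ℝ) ^ (1 - β) ≤ m := Nat.le_ceil _
  have hmle : (m:ℝ) ≤ 2 * (T:ℝ) ^ (1 - β) := by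
    have := Nat.ceil_lt_add_one (zero_le_one.trans hm1)
    rw [← hm] at this; linarith
  have hmR : (1:ℝ) ≤ m := hm1.trans hmge
  have hmpos : 0 < m := by exact_mod_cast (zero_lt_one.trans_le hmR)
  have hsplit : (T:ℝ) = Q * (T:ℝ) ^ (1 - β) := by
    rw [hQ, ← Real.rpow_add hT0]; simp
  have hTm1 : (T:ℝ) / m ≤ Q := by
    rw [div_le_iff₀ (by linarith)]
    nth_rewrite 1 [hsplit]
    gcongr
  have hTm2 : Q / 2 ≤ (T:ℝ) / m := by
    rw [le_div_iff₀ (by linarith)]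
    have h := mul_le_mul_of_nonneg_left hmle hQ0.le
    linarith
  have hα : alphaMix μ Z m ≤ Real.exp (-K_α * Q) := by
    refine (hmix m hmpos).le.trans (Real.exp_le_exp.mpr ?_)
    have : Q ≤ (m:ℝ) ^ r_α := by
      calc Q = ((T:ℝ) ^ (1 - β)) ^ r_α := by rw [← Real.rpow_mul hT0.le, hβr]
        _ ≤ _ := by gcongr
    nlinarith
  have hα0 := aux_alpha_nonneg μ Z m
  set x := (3 / 2) * (64 * σ2) * (p T : ℝ) * Real.log T / Q with hx
  set y := (64 * σ2) * Real.log T / Q with hy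
  have hx0 : 0 ≤ x := by positivity
  have hy0 : 0 < y := by positivity
  have hεT : ε T = Real.sqrt x + Real.sqrt y := hε T
  have hεpos : 0 < ε T := by
    rw [hεT]
    have := Real.sqrt_pos.mpr hy0
    have := Real.sqrt_nonneg x
    linarith
  have hε2 : 16 * (3 / 2 * p T + 1) * Real.log T / Q ≤ ε T ^ 2 := by
    have h1 : x + y ≤ ε T ^ 2 := by
      rw [hεT, add_sq, Real.sq_sqrt hx0, Real.sq_sqrt hy0.le]
      have := mul_nonneg (Real.sqrt_nonneg x) (Real.sqrt_nonneg y)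
      linarith
    refine le_trans ?_ h1
    rw [hx, hy, ← add_div]
    gcongr
    have : 0 ≤ (3 / 2 * (p T : ℝ) + 1) * Real.log T := by positivity
    nlinarith
  have hsmall : 3 * alphaMix μ Z m * (T / m : ℕ) * Real.exp ((T / m : ℕ) * (ε T / 2)) ≤ 1 := by
    have hdiv : ((T / m : ℕ) : ℝ) ≤ Q := (Nat.cast_div_le).trans hTm1
    calc _ ≤ 3 * Real.exp (-K_α * Q) * Q * Real.exp (Q * (K_α / 2)) := by gcongr
      _ = 3 * (Q * (Real.exp (-K_α * Q) * Real.exp (Q * (K_α / 2)))) := by ring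
      _ = 3 * (Q * Real.exp (-(K_α / 2) * Q)) := by
          rw [← Real.exp_add]; congr 3; ring
      _ ≤ 1 := hexp1.le
  have htail := aux_tail μ Z W hW hWmeas hZ (ε T) hεpos (by linarith) m T hmpos (by omega) hsmall
  have hexpb : Real.exp (- ((T:ℝ) / m) * ε T ^ 2 / 4) ≤ ((T:ℝ) ^ (p T + 2))⁻¹ := by
    rw [← Real.exp_log (show (0:ℝ) < (T:ℝ) ^ (p T + 2) by positivity), ← Real.exp_neg,
      Real.log_pow, Real.exp_le_exp]
    have h1 : Q / 2 * (16 * (3 / 2 * p T + 1) * Real.log T / Q) ≤ (T:ℝ) / m * ε T ^ 2 := by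
      gcongr
    have h2 : Q / 2 * (16 * (3 / 2 * p T + 1) * Real.log T / Q) =
      8 * (3 / 2 * p T + 1) * Real.log T := by field_simp; ring
    rw [h2] at h1
    have h3 : 0 ≤ (p T : ℝ) * Real.log T := by positivity
    push_cast
    nlinarith
  have hpre : 1 + K_3 * Real.sqrt (p T) / ε T ≤ T := by
    have h1 : Real.sqrt (p T) / ε T ≤ (T:ℝ) ^ (β / 2) := by
      rw [div_le_iff₀ hεpos]
      have h2 : Real.sqrt (p T / Q) ≤ ε T := by
        rw [hεT]
        have := Real.sqrt_nonneg y
        have : Real.sqrt (p T / Q) ≤ Real.sqrt x := by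
          apply Real.sqrt_le_sqrt
          rw [hx]
          gcongr
          have h5 : (1:ℝ) ≤ 3 / 2 * (64 * σ2) := by linarith
          have h6 : (1:ℝ) ≤ 3 / 2 * (64 * σ2) * Real.log T := one_le_mul_of_one_le_of_one_le h5 hlog
          have h7 : (0:ℝ) ≤ p T := Nat.cast_nonneg _
          have h8 := mul_le_mul_of_nonneg_left h6 h7
          linarith
        linarith
      rw [Real.sqrt_div (Nat.cast_nonneg _)] at h2
      have h3 : (T:ℝ) ^ (β / 2) = Real.sqrt Q := by
        rw [Real.sqrt_eq_rpow, hQ, ← Real.rpow_mul hT0.le]; congr 1; ring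
      rw [h3]
      rw [div_le_iff₀ (Real.sqrt_pos.mpr hQ0)] at h2
      linarith
    have h4 : 1 ≤ (T:ℝ) ^ (β / 2) := Real.one_le_rpow (by linarith) (by linarith)
    calc 1 + K_3 * Real.sqrt (p T) / ε T = 1 + K_3 * (Real.sqrt (p T) / ε T) := by ring
      _ ≤ (T:ℝ) ^ (β / 2) + K_3 * (T:ℝ) ^ (β / 2) := by gcongr
      _ = (T:ℝ) ^ (β / 2) * (1 + K_3) := by ring
      _ ≤ (T:ℝ) ^ (β / 2) * (T:ℝ) ^ (1 - β / 2) := by gcongr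
      _ = T := by rw [← Real.rpow_add hT0]; simp
  calc _ ≤ (T:ℝ) ^ (p T) * (12 * ((T:ℝ) ^ (p T + 2))⁻¹) := by
        gcongr
        exact htail.trans (by gcongr)
    _ = 12 / (T:ℝ) ^ 2 := by rw [pow_add]; field_simp
    _ ≤ 4 / (T:ℝ) + 0 := by
        rw [add_zero, div_le_div_iff₀ (by positivity) hT0]
        nlinarith

end
end

section
/- Let c > 0, δ̄ > 0, κ > 0 with c − δ̄ > 0. Suppose z = (z_1, z_{−1}) ∈ R × R^{p−1} satisfies (c + δ̄ w_1) z_1 + δ̄ w_{−1}' z_{−1} = κ for some w = (w_1, w_{−1}) ∈ R × R^{p−1} with ||w||_2 ≤ 1. Then z_1 ≤ κ/(c − δ̄) + (δ̄/(c − δ̄)) ||z_{−1}||_2 and z_1 ≥ κ/(c + δ̄) − (δ̄/(c − δ̄)) ||z_{−1}||_2; that is, the union over ||w||_2 ≤ 1 of the hyperplanes {z : (c + δ̄ w_1) z_1 + δ̄ w_{−1}' z_{−1} = κ} is contained in the intersection of the region underneath the hyper-cone z_1 = κ/(c − δ̄) + (δ̄/(c − δ̄)) sqrt(z_2² + ...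 + z_p²) and the region above the hyper-cone z_1 = κ/(c + δ̄) − (δ̄/(c − δ̄)) sqrt(z_2² + ... + z_p²). -/
/- STATEMENT 14: algebraic cone containment.
If z = (z₁, z₋₁) satisfies (c + δ̄ w₁) z₁ + δ̄ w₋₁'z₋₁ = κ for some w with ‖w‖₂ ≤ 1,
then z₁ ≤ κ/(c−δ̄) + (δ̄/(c−δ̄))‖z₋₁‖₂ and z₁ ≥ κ/(c+δ̄) − (δ̄/(c−δ̄))‖z₋₁‖₂. -/
theorem cone_containment {n : ℕ} (c δ κ : ℝ)
    (hc : 0 < c) (hδ : 0 < δ) (hκ : 0 < κ) (hcδ : 0 < c - δ)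
    (z1 : ℝ) (zrest : Fin n → ℝ) (w1 : ℝ) (wrest : Fin n → ℝ)
    (hw : Real.sqrt (w1 ^ 2 + ∑ i, wrest i ^ 2) ≤ 1)
    (heq : (c + δ * w1) * z1 + δ * ∑ i, wrest i * zrest i = κ) :
    z1 ≤ κ / (c - δ) + (δ / (c - δ)) * Real.sqrt (∑ i, zrest i ^ 2) ∧
    κ / (c + δ) - (δ / (c - δ)) * Real.sqrt (∑ i, zrest i ^ 2) ≤ z1 := by
  have hsum : w1 ^ 2 + ∑ i, wrest i ^ 2 ≤ 1 := by
    have := (Real.sqrt_le_left (by norm_num)).1 hw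
    simpa using this
  have hW : 0 ≤ ∑ i, wrest i ^ 2 := Finset.sum_nonneg fun i _ => sq_nonneg _
  have hZ : 0 ≤ ∑ i, zrest i ^ 2 := Finset.sum_nonneg fun i _ => sq_nonneg _
  have hw1 : |w1| ≤ 1 := abs_le_one_iff_mul_self_le_one.2 (by nlinarith)
  obtain ⟨hl, hu⟩ := abs_le.1 hw1
  have hS : |∑ i, wrest i * zrest i| ≤ Real.sqrt (∑ i, zrest i ^ 2) := by
    apply Real.abs_le_sqrt
    have h := Finset.sum_mul_sq_le_sq_mul_sq Finset.univ wrest zrest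
    nlinarith [sq_nonneg w1]
  obtain ⟨hSl, hSu⟩ := abs_le.1 hS
  have hR : 0 ≤ Real.sqrt (∑ i, zrest i ^ 2) := Real.sqrt_nonneg _
  generalize Real.sqrt (∑ i, zrest i ^ 2) = R at *
  generalize (∑ i, wrest i * zrest i) = S at *
  have ha1 : c - δ ≤ c + δ * w1 := by nlinarith
  have ha2 : c + δ * w1 ≤ c + δ := by nlinarith
  have ha : 0 < c + δ * w1 := by linarith
  generalize c + δ * w1 = a at *
  have hz : z1 = (κ - δ * S) / a := by
    rw [eq_div_iff ha.ne']; linarith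
  have hRd : 0 ≤ δ * R := by positivity
  have h1 : δ * S ≤ δ * R := by nlinarith
  have h2 : -(δ * R) ≤ δ * S := by nlinarith
  constructor
  · calc z1 = (κ - δ * S) / a := hz
      _ ≤ (κ + δ * R) / a := by gcongr; linarith
      _ ≤ (κ + δ * R) / (c - δ) := by gcongr
      _ = _ := by ring
  · calc κ / (c + δ) - (δ / (c - δ)) * R = κ / (c + δ) - (δ * R) / (c - δ) := by ring
      _ ≤ κ / a - (δ * R) / a := by gcongr
      _ = (κ - δ * R) / a := by ring
      _ ≤ (κ - δ * S) / a := by gcongr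
      _ = z1 := hz.symm
end
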